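/- Let m ≥ 2 be an integer. For every real q with 0 < q < 1, (m−1)·q^{(2m−3)²/(8(m−1))}·G_m(q) = (m−1)·Σ_{k=0}^{∞} χ_{4(m−1)}(k)·q^{k²/(8(m−1))}, where the powers of q are real powers. -/

import Mathlib

open Finset

/-- The q-Pochhammer symbol `(x;q)_n = ∏_{j=0}^{n-1} (1 - x q^j)`. -/
noncomputable def qPoch (x q : ℂ) (n : ℕ) : ℂ := ∏ j ∈ Finset.range n, (1 - x * q ^ j)

/-- The Gaussian binomial coefficient `[n choose k]_q`. -/
noncomputable def qBinom (q : ℂ) (n k : ℕ) : ℂ :=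
  if k ≤ n then qPoch q q n / (qPoch q q (n - k) * qPoch q q k) else 0

/-- Extend a tuple `g : Fin k → ℕ` to `ℕ → ℕ` by zero. -/
def pad (k : ℕ) (g : Fin k → ℕ) : ℕ → ℕ := fun j => if h : j < k then g ⟨j, h⟩ else 0

/-- The general term of the multi-sum `G_m(q)`: here `n j` denotes `n_{j+1}` (0-based indexing),
so `n (m-2)` is `n_{m-1}` and `n 0` is `n_1`. -/
noncomputable def Gterm (m : ℕ) (q : ℂ) (n : ℕ → ℕ) : ℂ :=
  (-1) ^ (n (m - 2)) *
    q ^ (n (m - 2) * (n (m - 2) + 1) +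
        ∑ j ∈ Finset.range (m - 2), (2 * (n j) ^ 2 + 2 * n j)) *
    qPoch q (q ^ 2) (n 0) / qPoch (-q) q (2 * n 0 + 1) *
    ∏ i ∈ Finset.range (m - 2), qBinom (q ^ 2) (n (i + 1)) (n i)

/-- The multi-sum `G_m(q)`. -/
noncomputable def G (m : ℕ) (q : ℂ) : ℂ := ∑' n : Fin (m - 1) → ℕ, Gterm m q (pad (m - 1) n)

/-- The truncated multi-sum `U_{m,N}(q)`. -/
noncomputable def U (m N : ℕ) (q : ℂ) : ℂ :=
  ∑ n ∈ Fintype.piFinset (fun _ : Fin (m - 1) => Finset.range N), Gterm m q (pad (m - 1) n)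

/-- The odd periodic function `χ_{4(m-1)}`. -/
def chiG (m : ℕ) (k : ℤ) : ℤ :=
  if k % (4 * ((m : ℤ) - 1)) = (2 * (m : ℤ) - 3) % (4 * ((m : ℤ) - 1)) then 1
  else if k % (4 * ((m : ℤ) - 1)) = (2 * (m : ℤ) - 1) % (4 * ((m : ℤ) - 1)) then -1
  else 0

/-!
The inner sums of `G_m` are `m - 2` steps along a Bailey chain in base `q²`, relative to `a = q²`,
started from a seed pair whose `(q²; q²)_n β_n` is the ratio of q-Pochhammer symbols in the general
term; the `α` of the seed is read off from the finite Jacobi triple product. Each step multiplies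
`α r` by `q ^ (2 r² + 2 r)`, and summing the last index against the conjugate weight
`(-1)ⁿ q ^ (n (n + 1))` replaces the whole multi-sum by the single series
`∑ r, q ^ ((2 m - 3) (r² + r)) (q ^ r² - q ^ (r + 1)²)`. With `q = t ^ (8 (m - 1))`, completing the
square turns its exponents into the squares of the integers on which `χ` is nonzero.
-/

open Filter Topology

section

variable {a q x y : ℂ}

/-! ### q-Pochhammer symbols and Gaussian binomial coefficients -/

lemma succ_choose_two (n : ℕ) : (n + 1).choose 2 = n.choose 2 + n := by
  rw [Nat.choose_succ_succ', Nat.choose_one_right, add_comm]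

lemma add_choose_two (m n : ℕ) : (m + n).choose 2 = m.choose 2 + n.choose 2 + m * n := by
  induction n with
  | zero => simp
  | succ n ih => rw [← add_assoc, succ_choose_two, ih, succ_choose_two]; ring

lemma two_mul_choose_two_add (n : ℕ) : 2 * n.choose 2 + n = n ^ 2 := by
  induction n with
  | zero => rfl
  | succ n ih => rw [succ_choose_two]; linarith

lemma qPoch_zero (x q : ℂ) : qPoch x q 0 = 1 := Finset.prod_range_zero _

lemma qPoch_succ (x q : ℂ) (n : ℕ) : qPoch x q (n + 1) = qPoch x q n * (1 - x * q ^ n) :=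
  Finset.prod_range_succ _ _

lemma qPoch_add (x q : ℂ) (m n : ℕ) :
    qPoch x q (m + n) = qPoch x q m * qPoch (x * q ^ m) q n := by
  simp only [qPoch, Finset.prod_range_add, pow_add, mul_assoc]

lemma qPoch_succ' (x q : ℂ) (n : ℕ) : qPoch x q (n + 1) = (1 - x) * qPoch (x * q) q n := by
  rw [add_comm, qPoch_add, pow_one]
  simp [qPoch]

lemma qPoch_mul_pow_ne_zero (h : ∀ n, qPoch x q n ≠ 0) (m n : ℕ) :
    qPoch (x * q ^ m) q n ≠ 0 :=
  right_ne_zero_of_mul (qPoch_add x q m n ▸ h (m + n))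

lemma qPoch_mul_ne_zero (h : ∀ n, qPoch x q n ≠ 0) (n : ℕ) : qPoch (x * q) q n ≠ 0 := by
  simpa using qPoch_mul_pow_ne_zero h 1 n

lemma one_sub_mul_pow_ne_zero (h : ∀ n, qPoch x q n ≠ 0) (n : ℕ) : 1 - x * q ^ n ≠ 0 :=
  right_ne_zero_of_mul (qPoch_succ x q n ▸ h (n + 1))

lemma one_sub_ne_zero_of_qPoch_ne_zero (h : ∀ n, qPoch x q n ≠ 0) : 1 - x ≠ 0 := by
  simpa using one_sub_mul_pow_ne_zero h 0

lemma qPoch_ne_zero (hx : ‖x‖ < 1) (hq : ‖q‖ ≤ 1) (n : ℕ) : qPoch x q n ≠ 0 := by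
  refine Finset.prod_ne_zero_iff.mpr fun j _ => sub_ne_zero.mpr fun h => ?_
  have hlt : ‖x * q ^ j‖ < 1 := by
    rw [norm_mul, norm_pow]
    exact mul_lt_one_of_nonneg_of_lt_one_left (norm_nonneg x) hx (pow_le_one₀ (norm_nonneg q) hq)
  rw [← h, norm_one] at hlt
  exact lt_irrefl _ hlt

lemma summable_norm_neg_mul_pow (x : ℂ) (hq : ‖q‖ < 1) : Summable fun n : ℕ => ‖-(x * q ^ n)‖ := by
  simpa only [norm_neg, norm_mul, norm_pow]
    using (summable_geometric_of_lt_one (norm_nonneg q) hq).mul_left ‖x‖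

lemma tendsto_qPoch (x : ℂ) (hq : ‖q‖ < 1) :
    Tendsto (qPoch x q) atTop (𝓝 (∏' n : ℕ, (1 + -(x * q ^ n)))) :=
  (multipliable_one_add_of_summable
    (summable_norm_neg_mul_pow x hq)).tendsto_prod_tprod_nat.congr fun n => by
      simp only [qPoch, sub_eq_add_neg]

lemma exists_norm_le_of_tendsto {u : ℕ → ℂ} {l : ℂ} (h : Tendsto u atTop (𝓝 l)) :
    ∃ C, ∀ n, ‖u n‖ ≤ C := by
  obtain ⟨C, hC⟩ := (Metric.isBounded_range_of_tendsto u h).exists_norm_le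
  exact ⟨C, fun n => hC _ ⟨n, rfl⟩⟩

lemma exists_norm_qPoch_le (x : ℂ) (hq : ‖q‖ < 1) : ∃ C, ∀ n, ‖qPoch x q n‖ ≤ C :=
  exists_norm_le_of_tendsto (tendsto_qPoch x hq)

lemma exists_norm_inv_qPoch_le (hq : ‖q‖ < 1) (h : ∀ n, qPoch x q n ≠ 0) :
    ∃ C, ∀ n, ‖(qPoch x q n)⁻¹‖ ≤ C := by
  refine exists_norm_le_of_tendsto ((tendsto_qPoch x hq).inv₀ ?_)
  refine tprod_one_add_ne_zero_of_summable (fun n => ?_) (summable_norm_neg_mul_pow x hq)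
  simpa only [← sub_eq_add_neg] using one_sub_mul_pow_ne_zero h n

lemma qBinom_eq_zero_of_lt (q : ℂ) {n k : ℕ} (h : n < k) : qBinom q n k = 0 :=
  if_neg h.not_ge

lemma qBinom_zero_right (h : ∀ n, qPoch q q n ≠ 0) (n : ℕ) : qBinom q n 0 = 1 := by
  simp [qBinom, qPoch_zero, h n]

lemma qBinom_self (h : ∀ n, qPoch q q n ≠ 0) (n : ℕ) : qBinom q n n = 1 := by
  simp [qBinom, qPoch_zero, h n]

lemma qBinom_succ_succ (h : ∀ n, qPoch q q n ≠ 0) {n k : ℕ} (hk : k ≤ n) :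
    qBinom q (n + 1) (k + 1) = qBinom q n (k + 1) + q ^ (n - k) * qBinom q n k := by
  obtain ⟨d, rfl⟩ := Nat.exists_eq_add_of_le hk
  rw [Nat.add_sub_cancel_left]
  cases d with
  | zero => simp [qBinom_self h, qBinom_eq_zero_of_lt]
  | succ d =>
    have hd_factor := one_sub_mul_pow_ne_zero h d
    have hk_factor := one_sub_mul_pow_ne_zero h k
    rw [qBinom, qBinom, qBinom, if_pos (by omega), if_pos (by omega), if_pos (by omega),
      show k + (d + 1) + 1 - (k + 1) = d + 1 by omega, show k + (d + 1) - (k + 1) = d by omega,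
      show k + (d + 1) - k = d + 1 by omega, qPoch_succ q q (k + (d + 1)), qPoch_succ q q d,
      qPoch_succ q q k]
    field_simp
    ring

lemma sum_qBinom_succ (h : ∀ n, qPoch q q n ≠ 0) (n : ℕ) (f : ℕ → ℂ) :
    ∑ k ∈ range (n + 2), qBinom q (n + 1) k * f k =
      ∑ k ∈ range (n + 1), qBinom q n k * f k +
        ∑ k ∈ range (n + 1), q ^ (n - k) * qBinom q n k * f (k + 1) := by
  have hpascal : ∀ k ∈ range (n + 1), qBinom q (n + 1) (k + 1) * f (k + 1) =
      qBinom q n (k + 1) * f (k + 1) + q ^ (n - k) * qBinom q n k * f (k + 1) := fun k hk => by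
    rw [qBinom_succ_succ h (mem_range_succ_iff.mp hk), add_mul]
  have hextend : ∑ k ∈ range (n + 1), qBinom q n k * f k =
      ∑ k ∈ range (n + 2), qBinom q n k * f k := by
    rw [sum_range_succ _ (n + 1), qBinom_eq_zero_of_lt q n.lt_succ_self, zero_mul, add_zero]
  rw [hextend, sum_range_succ', sum_congr rfl hpascal, sum_add_distrib, sum_range_succ' _ (n + 1),
    qBinom_zero_right h, qBinom_zero_right h]
  ring

theorem sum_qBinom_mul_eq_qPoch (h : ∀ n, qPoch q q n ≠ 0) (x : ℂ) (n : ℕ) :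
    ∑ k ∈ range (n + 1), qBinom q n k * ((-1) ^ k * q ^ k.choose 2 * x ^ k) = qPoch x q n := by
  induction n with
  | zero => simp [qBinom_self h, qPoch_zero]
  | succ n ih =>
    have hshift : ∀ k ∈ range (n + 1),
        q ^ (n - k) * qBinom q n k * ((-1) ^ (k + 1) * q ^ (k + 1).choose 2 * x ^ (k + 1)) =
          -(x * q ^ n) * (qBinom q n k * ((-1) ^ k * q ^ k.choose 2 * x ^ k)) := fun k hk => by
      have hpow : q ^ n = q ^ (n - k) * q ^ k := by
        rw [← pow_add, Nat.sub_add_cancel (mem_range_succ_iff.mp hk)]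
      rw [succ_choose_two, hpow]
      ring
    rw [sum_qBinom_succ h, ih, sum_congr rfl hshift, ← mul_sum, ih, qPoch_succ]
    ring

-- A limiting case of the q-Chu–Vandermonde sum.
theorem sum_qBinom_mul_div_qPoch (h : ∀ n, qPoch q q n ≠ 0) {x : ℂ}
    (hx : ∀ n, qPoch (x * q) q n ≠ 0) (n : ℕ) :
    ∑ k ∈ range (n + 1), qBinom q n k * (x ^ k * q ^ k ^ 2 / qPoch (x * q) q k) =
      1 / qPoch (x * q) q n := by
  induction n generalizing x with
  | zero => simp [qBinom_self h, qPoch_zero]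
  | succ n ih =>
    have hxq := qPoch_mul_ne_zero hx
    have hshift : ∀ k ∈ range (n + 1),
        q ^ (n - k) * qBinom q n k *
            (x ^ (k + 1) * q ^ (k + 1) ^ 2 / qPoch (x * q) q (k + 1)) =
          x * q ^ (n + 1) / (1 - x * q) *
            (qBinom q n k * ((x * q) ^ k * q ^ k ^ 2 / qPoch (x * q * q) q k)) := fun k hk => by
      have hpow : q ^ n = q ^ (n - k) * q ^ k := by
        rw [← pow_add, Nat.sub_add_cancel (mem_range_succ_iff.mp hk)]
      rw [qPoch_succ', pow_succ q n, hpow]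
      field_simp
      ring
    have := one_sub_mul_pow_ne_zero hx n
    rw [sum_qBinom_succ h, ih hx, sum_congr rfl hshift, ← mul_sum, ih hxq, div_mul_div_comm,
      mul_one, ← qPoch_succ', qPoch_succ]
    field_simp
    ring

lemma exists_norm_qBinom_le (hq : ‖q‖ < 1) : ∃ C, ∀ n k, ‖qBinom q n k‖ ≤ C := by
  have h := qPoch_ne_zero hq hq.le
  obtain ⟨B, hB⟩ := exists_norm_qPoch_le q hq
  obtain ⟨K, hK⟩ := exists_norm_inv_qPoch_le hq h
  have hB₀ : 0 ≤ B := (norm_nonneg _).trans (hB 0)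
  have hK₀ : 0 ≤ K := (norm_nonneg _).trans (hK 0)
  refine ⟨B * (K * K), fun n k => ?_⟩
  rw [qBinom]
  split_ifs
  · rw [div_eq_mul_inv, mul_inv, norm_mul, norm_mul]
    gcongr
    exacts [hB n, hK _, hK k]
  · rw [norm_zero]
    positivity

/-! ### Bailey pairs -/

/-- `(α, β)` is a Bailey pair relative to `a`, in base `q`. Bailey's lemma produces new pairs from
old ones and transforms sums over `β` into sums over `α`. -/
def IsBaileyPair (a q : ℂ) (α β : ℕ → ℂ) : Prop :=
  ∀ n, β n = ∑ r ∈ range (n + 1), α r / (qPoch q q (n - r) * qPoch (a * q) q (n + r))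

lemma sum_div_qPoch_mul_qPoch (hq : ∀ n, qPoch q q n ≠ 0) (ha : ∀ n, qPoch (a * q) q n ≠ 0)
    (s n : ℕ) :
    ∑ i ∈ range (n + 1), a ^ (s + i) * q ^ (s + i) ^ 2 /
        (qPoch q q (n - i) * (qPoch q q i * qPoch (a * q) q (2 * s + i))) =
      a ^ s * q ^ s ^ 2 / (qPoch q q n * qPoch (a * q) q (2 * s + n)) := by
  have hx : ∀ k, qPoch (a * q ^ (2 * s) * q) q k ≠ 0 := by
    simpa only [mul_right_comm] using qPoch_mul_pow_ne_zero ha (2 * s)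
  have hsplit : ∀ k, qPoch (a * q) q (2 * s + k) =
      qPoch (a * q) q (2 * s) * qPoch (a * q ^ (2 * s) * q) q k := fun k => by
    rw [qPoch_add, mul_right_comm]
  have hterm : ∀ i ∈ range (n + 1), a ^ (s + i) * q ^ (s + i) ^ 2 /
        (qPoch q q (n - i) * (qPoch q q i * qPoch (a * q) q (2 * s + i))) =
      a ^ s * q ^ s ^ 2 / (qPoch q q n * qPoch (a * q) q (2 * s)) *
        (qBinom q n i *
          ((a * q ^ (2 * s)) ^ i * q ^ i ^ 2 / qPoch (a * q ^ (2 * s) * q) q i)) := fun i hi => by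
    have := hq n
    rw [hsplit, qBinom, if_pos (mem_range_succ_iff.mp hi)]
    field_simp
    ring
  rw [sum_congr rfl hterm, ← mul_sum, sum_qBinom_mul_div_qPoch hq hx, hsplit, div_mul_div_comm,
    mul_one, mul_assoc]

-- Bailey's lemma with both parameters `ρ₁, ρ₂ → ∞`.
theorem IsBaileyPair.chain {α β : ℕ → ℂ} (h : IsBaileyPair a q α β)
    (hq : ∀ n, qPoch q q n ≠ 0) (ha : ∀ n, qPoch (a * q) q n ≠ 0) :
    IsBaileyPair a q (fun r => a ^ r * q ^ r ^ 2 * α r)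
      fun n => ∑ r ∈ range (n + 1), a ^ r * q ^ r ^ 2 * β r / qPoch q q (n - r) := by
  intro n
  have hexpand : ∀ r ∈ range (n + 1), a ^ r * q ^ r ^ 2 * β r / qPoch q q (n - r) =
      ∑ s ∈ range (r + 1), α s * (a ^ r * q ^ r ^ 2 /
        (qPoch q q (n - r) * (qPoch q q (r - s) * qPoch (a * q) q (r + s)))) := fun r _ => by
    rw [h r, mul_sum, sum_div]
    exact sum_congr rfl fun s _ => by ring
  have hinner : ∀ s ∈ range (n + 1), ∑ r ∈ Ico s (n + 1), a ^ r * q ^ r ^ 2 /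
        (qPoch q q (n - r) * (qPoch q q (r - s) * qPoch (a * q) q (r + s))) =
      a ^ s * q ^ s ^ 2 / (qPoch q q (n - s) * qPoch (a * q) q (n + s)) := fun s hs => by
    obtain ⟨d, rfl⟩ := Nat.exists_eq_add_of_le (mem_range_succ_iff.mp hs)
    rw [sum_Ico_eq_sum_range, show s + d + 1 - s = d + 1 by omega,
      show s + d + s = 2 * s + d by ring, Nat.add_sub_cancel_left, ← sum_div_qPoch_mul_qPoch hq ha]
    refine sum_congr rfl fun i _ => ?_
    rw [Nat.add_sub_add_left, Nat.add_sub_cancel_left, show s + i + s = 2 * s + i by ring]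
  calc ∑ r ∈ range (n + 1), a ^ r * q ^ r ^ 2 * β r / qPoch q q (n - r)
      = ∑ r ∈ range (n + 1), ∑ s ∈ range (r + 1), α s * (a ^ r * q ^ r ^ 2 /
          (qPoch q q (n - r) * (qPoch q q (r - s) * qPoch (a * q) q (r + s)))) :=
        sum_congr rfl hexpand
    _ = ∑ s ∈ range (n + 1), ∑ r ∈ Ico s (n + 1), α s * (a ^ r * q ^ r ^ 2 /
          (qPoch q q (n - r) * (qPoch q q (r - s) * qPoch (a * q) q (r + s)))) :=
        sum_comm' fun r s => by simp only [mem_range, mem_Ico]; omega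
    _ = _ := sum_congr rfl fun s hs => by rw [← mul_sum, hinner s hs]; ring

lemma summable_norm_pow_mul_pow_choose_two (x : ℂ) (hq : ‖q‖ < 1) :
    Summable fun n : ℕ => ‖x ^ n * q ^ n.choose 2‖ := by
  have hratio : Tendsto (fun n : ℕ => ‖x‖ * ‖q‖ ^ n) atTop (𝓝 0) := by
    simpa using (tendsto_pow_atTop_nhds_zero_of_lt_one (norm_nonneg q) hq).const_mul ‖x‖
  refine summable_of_ratio_norm_eventually_le one_half_lt_one ?_
  filter_upwards [hratio.eventually_le_const one_half_pos] with n hn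
  calc ‖‖x ^ (n + 1) * q ^ (n + 1).choose 2‖‖
      = ‖x‖ * ‖q‖ ^ n * ‖‖x ^ n * q ^ n.choose 2‖‖ := by
        rw [succ_choose_two]
        simp only [norm_norm, norm_mul, norm_pow]
        ring
    _ ≤ 1 / 2 * ‖‖x ^ n * q ^ n.choose 2‖‖ := by gcongr

lemma hasSum_pow_mul_div_qPoch_succ (hq : ‖q‖ < 1) (hx : ∀ n, qPoch x q n ≠ 0) :
    HasSum (fun k : ℕ => (-1) ^ k * (x ^ k * q ^ k.choose 2) / qPoch x q (k + 1)) 1 := by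
  obtain ⟨K, hK⟩ := exists_norm_inv_qPoch_le hq hx
  have hdom := (summable_norm_pow_mul_pow_choose_two x hq).mul_right K
  have hbound : ∀ k n : ℕ, ‖(-1) ^ k * (x ^ k * q ^ k.choose 2) / qPoch x q n‖ ≤
      ‖x ^ k * q ^ k.choose 2‖ * K := fun k n => by
    rw [div_eq_mul_inv, norm_mul, norm_mul, norm_pow, norm_neg, norm_one, one_pow, one_mul]
    gcongr
    exact hK n
  have htelescope : ∀ n, ∑ k ∈ range n, (-1) ^ k * (x ^ k * q ^ k.choose 2) / qPoch x q (k + 1) =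
      1 - (-1) ^ n * (x ^ n * q ^ n.choose 2) / qPoch x q n := fun n => by
    induction n with
    | zero => simp [qPoch_zero]
    | succ n ih =>
      have := one_sub_mul_pow_ne_zero hx n
      rw [sum_range_succ, ih, qPoch_succ, succ_choose_two]
      field_simp
      ring
  rw [hasSum_iff_tendsto_nat_of_summable_norm
    (hdom.of_nonneg_of_le (fun _ => norm_nonneg _) fun k => hbound k _)]
  simp only [htelescope]
  simpa using (squeeze_zero_norm (fun n => hbound n n) hdom.tendsto_atTop_zero).const_sub 1

-- The q-Gauss sum `₂φ₁(q ^ (m + 1), b; x q ^ (m + 1); x / b)` in the limit `b → ∞`, with the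
-- infinite products cancelled.
theorem hasSum_pow_mul_qPoch_div_qPoch (hq : ‖q‖ < 1) (hx : ∀ n, qPoch x q n ≠ 0) (m : ℕ) :
    HasSum (fun k : ℕ => (-1) ^ k * (x ^ k * q ^ k.choose 2) * qPoch q q (m + k) /
      (qPoch q q k * qPoch x q (m + 1 + k))) (qPoch q q m) := by
  have hq₀ := qPoch_ne_zero hq hq.le
  induction m generalizing x with
  | zero =>
    simpa only [zero_add, qPoch_zero, add_comm 1, mul_comm (qPoch q q _),
      mul_div_mul_right _ _ (hq₀ _)] using hasSum_pow_mul_div_qPoch_succ hq hx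
  | succ m ih =>
    have hterm : ∀ k, (-1) ^ k * (x ^ k * q ^ k.choose 2) * qPoch q q (m + 1 + k) /
          (qPoch q q k * qPoch x q (m + 1 + 1 + k)) =
        (-1) ^ k * (x ^ k * q ^ k.choose 2) * qPoch q q (m + k) /
            (qPoch q q k * qPoch x q (m + 1 + k)) -
          q ^ (m + 1) * ((-1) ^ k * ((x * q) ^ k * q ^ k.choose 2) * qPoch q q (m + k) /
            (qPoch q q k * qPoch (x * q) q (m + 1 + k))) := fun k => by
      have hx₁ := one_sub_ne_zero_of_qPoch_ne_zero hx
      have hidx : m + 1 + k = m + k + 1 := by ring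
      have hidx_succ : m + 1 + 1 + k = m + k + 1 + 1 := by ring
      have hxq : qPoch (x * q) q (m + k + 1) =
          qPoch x q (m + k + 1) * (1 - x * q ^ (m + k + 1)) / (1 - x) := by
        rw [← qPoch_succ, qPoch_succ' x q, mul_div_cancel_left₀ _ hx₁]
      have hx_factor := one_sub_mul_pow_ne_zero hx (m + k + 1)
      rw [hidx, hidx_succ, hxq, qPoch_succ x q (m + k + 1), qPoch_succ q q (m + k)]
      field_simp
      ring
    have hlim : qPoch q q (m + 1) = qPoch q q m - q ^ (m + 1) * qPoch q q m := by
      rw [qPoch_succ]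
      ring
    rw [hlim, funext hterm]
    exact (ih hx).sub ((ih (qPoch_mul_ne_zero hx)).mul_left _)

lemma tsum_sum_antidiagonal {f : ℕ × ℕ → ℂ} (hf : Summable f) :
    ∑' n, ∑ p ∈ antidiagonal n, f p = ∑' r, ∑' i, f (r, i) := by
  let e := HasAntidiagonal.sigmaAntidiagonalEquivProd (A := ℕ)
  have hσ : Summable (f ∘ e) := e.summable_iff.mpr hf
  calc ∑' n, ∑ p ∈ antidiagonal n, f p
      = ∑' n, ∑' p : antidiagonal n, (f ∘ e) ⟨n, p⟩ :=
        tsum_congr fun n => (Finset.tsum_subtype (antidiagonal n) f).symm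
    _ = ∑' p, (f ∘ e) p := hσ.tsum_sigma.symm
    _ = ∑' p, f p := e.tsum_eq f
    _ = ∑' r, ∑' i, f (r, i) := hf.tsum_prod

theorem bailey_transform {α β γ δ u v : ℕ → ℂ}
    (hβ : ∀ n, β n = ∑ r ∈ range (n + 1), α r * (u (n - r) * v (n + r)))
    (hγ : ∀ r, HasSum (fun i => δ (r + i) * (u i * v (2 * r + i))) (γ r))
    (hs : Summable fun p : ℕ × ℕ => α p.1 * (δ (p.1 + p.2) * (u p.2 * v (2 * p.1 + p.2)))) :
    ∑' n, δ n * β n = ∑' r, γ r * α r := by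
  have hdiag : ∀ n, δ n * β n =
      ∑ p ∈ antidiagonal n, α p.1 * (δ (p.1 + p.2) * (u p.2 * v (2 * p.1 + p.2))) := fun n => by
    rw [Nat.sum_antidiagonal_eq_sum_range_succ_mk, hβ, mul_sum]
    refine sum_congr rfl fun r hr => ?_
    obtain ⟨i, rfl⟩ := Nat.exists_eq_add_of_le (mem_range_succ_iff.mp hr)
    rw [Nat.add_sub_cancel_left, show r + i + r = 2 * r + i by ring]
    ring
  rw [tsum_congr hdiag, tsum_sum_antidiagonal hs]
  exact tsum_congr fun r => ((hγ r).mul_left (α r)).tsum_eq.trans (mul_comm _ _)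

lemma summable_mul_pow_mul_pow_choose_two_add (x : ℂ) (hq : ‖q‖ < 1) {w : ℕ × ℕ → ℂ} {C : ℝ}
    (hw : ∀ p, ‖w p‖ ≤ C) :
    Summable fun p : ℕ × ℕ => w p * (x ^ (p.1 + p.2) * q ^ (p.1 + p.2).choose 2) := by
  have hx := summable_norm_pow_mul_pow_choose_two x hq
  have hprod := hx.mul_of_nonneg hx (fun _ => norm_nonneg _) fun _ => norm_nonneg _
  refine Summable.of_norm_bounded (hprod.mul_left C) fun p => ?_
  have hfactor : x ^ (p.1 + p.2) * q ^ (p.1 + p.2).choose 2 =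
      x ^ p.1 * q ^ p.1.choose 2 * (x ^ p.2 * q ^ p.2.choose 2) * q ^ (p.1 * p.2) := by
    rw [add_choose_two]
    ring
  have hq_pow : ‖q ^ (p.1 * p.2)‖ ≤ 1 := by
    rw [norm_pow]
    exact pow_le_one₀ (norm_nonneg q) hq.le
  rw [norm_mul, hfactor, norm_mul, norm_mul]
  have hC : 0 ≤ C := (norm_nonneg _).trans (hw p)
  exact mul_le_mul (hw p) (mul_le_of_le_one_right (by positivity) hq_pow) (by positivity) hC

lemma hasSum_bailey_conjugate (hq : ‖q‖ < 1) (ha : ∀ n, qPoch a q n ≠ 0) (r : ℕ) :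
    HasSum (fun i => (-1) ^ (r + i) * (a ^ (r + i) * q ^ (r + i).choose 2) * qPoch q q (r + i) *
        ((qPoch q q i)⁻¹ * (qPoch (a * q) q (2 * r + i))⁻¹))
      ((1 - a) * ((-1) ^ r * (a ^ r * q ^ r.choose 2)) * qPoch q q r / qPoch a q r) := by
  have ha₁ := one_sub_ne_zero_of_qPoch_ne_zero ha
  have hsplit : ∀ i, qPoch (a * q) q (2 * r + i) =
      qPoch a q r * qPoch (a * q ^ r) q (r + 1 + i) / (1 - a) := fun i => by
    rw [← qPoch_add, show r + (r + 1 + i) = 2 * r + i + 1 by ring, qPoch_succ',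
      mul_div_cancel_left₀ _ ha₁]
  have hsum := (hasSum_pow_mul_qPoch_div_qPoch hq (qPoch_mul_pow_ne_zero ha r) r).mul_left
    ((1 - a) * ((-1) ^ r * (a ^ r * q ^ r.choose 2)) / qPoch a q r)
  rw [div_mul_eq_mul_div] at hsum
  refine hsum.congr_fun fun i => ?_
  rw [hsplit, add_choose_two]
  field_simp
  ring

-- The limiting form of Bailey's lemma with parameters `ρ₁ = q` and `ρ₂ → ∞`.
theorem IsBaileyPair.tsum_eq {α β : ℕ → ℂ} (h : IsBaileyPair a q α β) (hq : ‖q‖ < 1)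
    (ha : ∀ n, qPoch a q n ≠ 0) {C : ℝ} (hα : ∀ r, ‖α r‖ ≤ C) :
    ∑' n, (-1) ^ n * (a ^ n * q ^ n.choose 2) * qPoch q q n * β n =
      ∑' r, (1 - a) * ((-1) ^ r * (a ^ r * q ^ r.choose 2)) * qPoch q q r / qPoch a q r * α r := by
  refine bailey_transform (u := fun n => (qPoch q q n)⁻¹) (v := fun n => (qPoch (a * q) q n)⁻¹)
    (fun n => by simp only [h n, div_eq_mul_inv, mul_inv]) (hasSum_bailey_conjugate hq ha) ?_
  obtain ⟨B, hB⟩ := exists_norm_qPoch_le q hq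
  obtain ⟨K, hK⟩ := exists_norm_inv_qPoch_le hq (qPoch_ne_zero hq hq.le)
  obtain ⟨L, hL⟩ := exists_norm_inv_qPoch_le hq (qPoch_mul_ne_zero ha)
  have hC₀ : 0 ≤ C := (norm_nonneg _).trans (hα 0)
  have hB₀ : 0 ≤ B := (norm_nonneg _).trans (hB 0)
  have hK₀ : 0 ≤ K := (norm_nonneg _).trans (hK 0)
  refine (summable_mul_pow_mul_pow_choose_two_add a hq (C := C * (B * (K * L)))
    (w := fun p => α p.1 * ((-1) ^ (p.1 + p.2) * qPoch q q (p.1 + p.2) *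
      ((qPoch q q p.2)⁻¹ * (qPoch (a * q) q (2 * p.1 + p.2))⁻¹))) fun p => ?_).congr fun p => by
        ring
  simp only [norm_mul, norm_pow, norm_neg, norm_one, one_pow, one_mul]
  gcongr
  exacts [hα _, hB _, hK _, hL _]

/-! ### The finite Jacobi triple product and the seed pair -/

lemma qPoch_div_pow (hq : q ≠ 0) (hx : x ≠ 0) (m : ℕ) :
    qPoch (x / q ^ m) q m =
      (-1) ^ m * q ^ m.choose 2 * (x / q ^ m) ^ m * qPoch (q / x) q m := by
  induction m with
  | zero => simp [qPoch_zero]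
  | succ m ih =>
    have hshift : x / q ^ m = x / q ^ (m + 1) * q := by
      rw [pow_succ]
      field_simp
    have hinv : q / x * q ^ m = (x / q ^ (m + 1))⁻¹ := by
      rw [inv_div, pow_succ']
      ring
    have hy : x / q ^ (m + 1) ≠ 0 := div_ne_zero hx (pow_ne_zero _ hq)
    rw [qPoch_succ', ← hshift, ih, qPoch_succ, succ_choose_two, hinv, hshift]
    generalize x / q ^ (m + 1) = y at hy
    field_simp
    ring

lemma neg_one_pow_mul_pow_choose_two_reflect (hq : q ≠ 0) (hy : y ≠ 0) (k s : ℕ) :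
    (-1) ^ (k + s) * q ^ (k + s).choose 2 * y ^ (k + s) *
        ((-1) ^ s * q ^ (s + 1).choose 2 / (y * q ^ (k + s)) ^ s) =
      (-1) ^ k * q ^ k.choose 2 * y ^ k := by
  have hq_pow : (q ^ (k + s)) ^ s = q ^ s.choose 2 * q ^ (s.choose 2 + s) * q ^ (k * s) := by
    rw [← pow_mul, ← pow_add, ← pow_add, add_mul, ← sq, ← two_mul_choose_two_add s]
    ring_nf
  have hsign : (-1 : ℂ) ^ (k + s) * (-1) ^ s = (-1) ^ k := by
    rw [pow_add, mul_assoc, ← mul_pow, neg_one_mul, neg_neg, one_pow, mul_one]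
  rw [mul_pow, hq_pow, add_choose_two, succ_choose_two, ← hsign]
  field_simp
  ring

theorem finite_jacobi_triple_product (h : ∀ n, qPoch q q n ≠ 0) (hq : q ≠ 0) (hx : x ≠ 0)
    (m n : ℕ) :
    ∑ r ∈ range m, qBinom q (m + n) (m - 1 - r) *
          ((-1) ^ (r + 1) * q ^ (r + 2).choose 2 / x ^ (r + 1)) +
        ∑ r ∈ range (n + 1), qBinom q (m + n) (m + r) * ((-1) ^ r * q ^ r.choose 2 * x ^ r) =
      qPoch (q / x) q m * qPoch x q n := by
  have hqm : q ^ m ≠ 0 := pow_ne_zero m hq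
  obtain ⟨y, hy⟩ : ∃ y, x / q ^ m = y := ⟨_, rfl⟩
  have hx_eq : x = y * q ^ m := (div_eq_iff hqm).mp hy
  have hy₀ : y ≠ 0 := hy ▸ div_ne_zero hx hqm
  have hD₀ : (-1) ^ m * q ^ m.choose 2 * y ^ m ≠ 0 := by simp [hq, hy₀]
  have hneg : ∀ r ∈ range m, (-1) ^ m * q ^ m.choose 2 * y ^ m *
        ((-1) ^ (r + 1) * q ^ (r + 2).choose 2 / x ^ (r + 1)) =
      (-1) ^ (m - 1 - r) * q ^ (m - 1 - r).choose 2 * y ^ (m - 1 - r) := fun r hr => by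
    obtain ⟨k, rfl⟩ := Nat.exists_eq_add_of_lt (mem_range.mp hr)
    rw [show r + k + 1 - 1 - r = k by omega, hx_eq, show r + k + 1 = k + (r + 1) by ring]
    exact neg_one_pow_mul_pow_choose_two_reflect hq hy₀ k (r + 1)
  have hpos : ∀ r, (-1) ^ m * q ^ m.choose 2 * y ^ m * ((-1) ^ r * q ^ r.choose 2 * x ^ r) =
      (-1) ^ (m + r) * q ^ (m + r).choose 2 * y ^ (m + r) := fun r => by
    rw [hx_eq, add_choose_two]
    ring
  refine mul_left_cancel₀ hD₀ ?_
  calc _ = ∑ k ∈ range (m + (n + 1)), qBinom q (m + n) k *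
          ((-1) ^ k * q ^ k.choose 2 * y ^ k) := by
        rw [sum_range_add _ m, mul_add, mul_sum, mul_sum]
        congr 1
        · rw [← sum_range_reflect (fun k => qBinom q (m + n) k * _) m]
          exact sum_congr rfl fun r hr => by rw [mul_left_comm, hneg r hr]
        · exact sum_congr rfl fun r _ => by rw [mul_left_comm, hpos]
    _ = qPoch y q m * qPoch x q n := by
        rw [← add_assoc, sum_qBinom_mul_eq_qPoch h, qPoch_add, ← hx_eq]
    _ = (-1) ^ m * q ^ m.choose 2 * y ^ m * (qPoch (q / x) q m * qPoch x q n) := by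
        rw [← hy, qPoch_div_pow hq hx, mul_assoc]

lemma qPoch_sq (q : ℂ) (n : ℕ) :
    qPoch (q ^ 2) (q ^ 2) n = qPoch q q n * qPoch (-q) q n := by
  simp only [qPoch, ← prod_mul_distrib]
  exact prod_congr rfl fun j _ => by ring

lemma qPoch_self_two_mul_add_one (q : ℂ) (n : ℕ) :
    qPoch q q (2 * n + 1) = qPoch q (q ^ 2) (n + 1) * qPoch (q ^ 2) (q ^ 2) n := by
  induction n with
  | zero => simp [qPoch]
  | succ n ih =>
    rw [show 2 * (n + 1) + 1 = 2 * n + 1 + 1 + 1 by ring, qPoch_succ, qPoch_succ, ih,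
      qPoch_succ q (q ^ 2) (n + 1), qPoch_succ (q ^ 2) (q ^ 2) n]
    ring

lemma sq_pow_choose_two_mul_pow (q : ℂ) (r : ℕ) : (q ^ 2) ^ r.choose 2 * q ^ r = q ^ r ^ 2 := by
  rw [← pow_mul, ← pow_add, two_mul_choose_two_add]

lemma qBinom_add_right (q : ℂ) (m n : ℕ) :
    qBinom q (m + n) n = qPoch q q (m + n) / (qPoch q q m * qPoch q q n) := by
  rw [qBinom, if_pos (Nat.le_add_left n m), Nat.add_sub_cancel]

lemma norm_sq_lt_one (hq : ‖q‖ < 1) : ‖q ^ 2‖ < 1 := by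
  rw [norm_pow]
  exact pow_lt_one₀ (norm_nonneg q) hq two_ne_zero

lemma sum_sub_div_qPoch_mul_qPoch (hq : ‖q‖ < 1) (hq₀ : q ≠ 0) (n : ℕ) :
    ∑ r ∈ range (n + 1), (-1) ^ r * (q ^ r ^ 2 - q ^ (r + 1) ^ 2) /
        (qPoch (q ^ 2) (q ^ 2) (n - r) * qPoch (q ^ 2) (q ^ 2) (n + r + 1)) =
      qPoch q (q ^ 2) (n + 1) * qPoch q (q ^ 2) n / qPoch (q ^ 2) (q ^ 2) (2 * n + 1) := by
  have hp := qPoch_ne_zero (norm_sq_lt_one hq) (norm_sq_lt_one hq).le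
  have hjacobi := finite_jacobi_triple_product hp (pow_ne_zero 2 hq₀) hq₀ (n + 1) n
  rw [show q ^ 2 / q = q by field_simp, ← sum_add_distrib] at hjacobi
  rw [eq_div_iff (hp _), ← hjacobi, sum_mul]
  refine sum_congr rfl fun r hr => ?_
  obtain ⟨d, rfl⟩ := Nat.exists_eq_add_of_le (mem_range_succ_iff.mp hr)
  have hneg : (q ^ 2) ^ (r + 2).choose 2 / q ^ (r + 1) = q ^ (r + 1) ^ 2 := by
    rw [← sq_pow_choose_two_mul_pow, succ_choose_two (r + 1), pow_add]
    field_simp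
    ring
  have hleft : qBinom (q ^ 2) (r + d + 1 + (r + d)) (r + d + 1 - 1 - r) =
      qPoch (q ^ 2) (q ^ 2) (2 * (r + d) + 1) /
        (qPoch (q ^ 2) (q ^ 2) (r + d + r + 1) * qPoch (q ^ 2) (q ^ 2) d) := by
    rw [show r + d + 1 - 1 - r = d by omega, show r + d + 1 + (r + d) = r + d + r + 1 + d by ring,
      qBinom_add_right, show 2 * (r + d) + 1 = r + d + r + 1 + d by ring]
  have hright : qBinom (q ^ 2) (r + d + 1 + (r + d)) (r + d + 1 + r) =
      qPoch (q ^ 2) (q ^ 2) (2 * (r + d) + 1) /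
        (qPoch (q ^ 2) (q ^ 2) d * qPoch (q ^ 2) (q ^ 2) (r + d + r + 1)) := by
    rw [show r + d + 1 + (r + d) = d + (r + d + r + 1) by ring,
      show r + d + 1 + r = r + d + r + 1 by ring, qBinom_add_right,
      show 2 * (r + d) + 1 = d + (r + d + r + 1) by ring]
  rw [hleft, hright, mul_div_assoc _ _ (q ^ (r + 1)), hneg, mul_assoc _ _ (q ^ r),
    sq_pow_choose_two_mul_pow, Nat.add_sub_cancel_left]
  ring

theorem isBaileyPair_seed (hq : ‖q‖ < 1) (hq₀ : q ≠ 0) :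
    IsBaileyPair (q ^ 2) (q ^ 2)
      (fun r => (-1) ^ r * (q ^ r ^ 2 - q ^ (r + 1) ^ 2) / (1 - q ^ 2))
      fun n => qPoch q (q ^ 2) n / qPoch (-q) q (2 * n + 1) / qPoch (q ^ 2) (q ^ 2) n := by
  have hp := qPoch_ne_zero (norm_sq_lt_one hq) (norm_sq_lt_one hq).le
  intro n
  have hterm : ∀ r ∈ range (n + 1), (-1) ^ r * (q ^ r ^ 2 - q ^ (r + 1) ^ 2) / (1 - q ^ 2) /
        (qPoch (q ^ 2) (q ^ 2) (n - r) * qPoch (q ^ 2 * q ^ 2) (q ^ 2) (n + r)) =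
      (-1) ^ r * (q ^ r ^ 2 - q ^ (r + 1) ^ 2) /
        (qPoch (q ^ 2) (q ^ 2) (n - r) * qPoch (q ^ 2) (q ^ 2) (n + r + 1)) := fun r _ => by
    rw [qPoch_succ' _ _ (n + r), div_div, mul_left_comm]
  have hp_odd := hp (2 * n + 1)
  rw [qPoch_sq, qPoch_self_two_mul_add_one] at hp_odd
  rw [sum_congr rfl hterm, sum_sub_div_qPoch_mul_qPoch hq hq₀, qPoch_sq q (2 * n + 1),
    qPoch_self_two_mul_add_one, mul_assoc, mul_div_mul_left _ _
      (left_ne_zero_of_mul (left_ne_zero_of_mul hp_odd)), mul_comm (qPoch _ _ n)]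
  exact div_div _ _ _

/-! ### Multi-sums along a chain of kernels -/

section KernelChain

variable {ι 𝕜 : Type*}

lemma summable_prod_apply_of_nonneg {k : ℕ} {f : Fin k → ι → ℝ} (hf : ∀ i, Summable (f i))
    (hf₀ : ∀ i x, 0 ≤ f i x) : Summable fun n : Fin k → ι => ∏ i, f i (n i) := by
  induction k with
  | zero => exact .of_finite
  | succ k ih =>
    rw [← (Fin.consEquiv fun _ : Fin (k + 1) => ι).summable_iff]
    refine ((hf 0).mul_of_nonneg (ih (fun i => hf i.succ) fun i => hf₀ i.succ) (hf₀ 0)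
      fun n => prod_nonneg fun i _ => hf₀ i.succ (n i)).congr fun p => ?_
    simp [Fin.consEquiv, Fin.prod_univ_succ]

variable [NormedField 𝕜]

/-- The linear operator with kernel `w` on functions `b : ι → 𝕜`; its iterates are the nested sums
along a chain of indices. It takes the value `0` at every `N` where `w N · * b ·` is not
summable. -/
noncomputable def kernelOp (w : ι → ι → 𝕜) (b : ι → 𝕜) (N : ι) : 𝕜 := ∑' r, w N r * b r

variable [CompleteSpace 𝕜] {w : ι → ι → 𝕜} {b s : ι → 𝕜} {g : ι → ℝ} {C : ℝ}

lemma summable_kernel_chain (hg : Summable g) (hw : ∀ N r, ‖w N r‖ ≤ g r)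
    (hb : ∀ r, ‖b r‖ ≤ C) (hs : Summable fun N => ‖s N‖) (k : ℕ) :
    Summable fun n : Fin (k + 1) → ι =>
      s (n (Fin.last k)) * ((∏ i : Fin k, w (n i.succ) (n i.castSucc)) * b (n 0)) := by
  have hdom := (summable_prod_apply_of_nonneg
    (f := Fin.snoc (α := fun _ : Fin (k + 1) => ι → ℝ) (fun _ => g) fun N => ‖s N‖)
    (Fin.lastCases (by simpa using hs) fun i => by simpa using hg)
    (Fin.lastCases (by simp) fun i r => by
      simpa using (norm_nonneg _).trans (hw r r))).mul_right C
  refine hdom.of_norm_bounded fun n => ?_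
  have hprod : ∏ i : Fin k, ‖w (n i.succ) (n i.castSucc)‖ ≤ ∏ i : Fin k, g (n i.castSucc) :=
    prod_le_prod (fun _ _ => norm_nonneg _) fun i _ => hw _ _
  have hg₀ : 0 ≤ ∏ i : Fin k, g (n i.castSucc) :=
    (prod_nonneg fun _ _ => norm_nonneg _).trans hprod
  rw [Fin.prod_univ_castSucc, norm_mul, norm_mul, norm_prod]
  simp only [Fin.snoc_castSucc, Fin.snoc_last]
  rw [mul_assoc, mul_left_comm]
  gcongr
  exact hb _

theorem tsum_kernel_chain (hg : Summable g) (hw : ∀ N r, ‖w N r‖ ≤ g r)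
    (hb : ∀ r, ‖b r‖ ≤ C) (hs : Summable fun N => ‖s N‖) (k : ℕ) :
    ∑' n : Fin (k + 1) → ι,
        s (n (Fin.last k)) * ((∏ i : Fin k, w (n i.succ) (n i.castSucc)) * b (n 0)) =
      ∑' N, s N * (kernelOp w)^[k] b N := by
  induction k generalizing s with
  | zero => simpa using (Equiv.funUnique (Fin 1) ι).tsum_eq fun N => s N * b N
  | succ k ih =>
    let e := Fin.snocEquiv fun _ : Fin (k + 2) => ι
    have hsum := e.summable_iff.mpr (summable_kernel_chain hg hw hb hs (k + 1))
    have hsnoc : ∀ (N : ι) (n : Fin (k + 1) → ι),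
        s (e (N, n) (Fin.last (k + 1))) *
            ((∏ i : Fin (k + 1), w (e (N, n) i.succ) (e (N, n) i.castSucc)) * b (e (N, n) 0)) =
          s N * (w N (n (Fin.last k)) *
            ((∏ i : Fin k, w (n i.succ) (n i.castSucc)) * b (n 0))) := fun N n => by
      have hlast : e (N, n) (Fin.last (k + 1)) = N := Fin.snoc_last (α := fun _ => ι) N n
      have hcast : ∀ i : Fin (k + 1), e (N, n) i.castSucc = n i := fun i =>
        Fin.snoc_castSucc (α := fun _ => ι) N n i
      rw [Fin.prod_univ_castSucc]
      simp only [← Fin.castSucc_succ, hcast, Fin.succ_last, hlast, ← Fin.castSucc_zero]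
      ring
    have hwN : ∀ N, Summable fun r => ‖w N r‖ := fun N =>
      hg.of_nonneg_of_le (fun _ => norm_nonneg _) (hw N)
    rw [← e.tsum_eq]
    refine hsum.tsum_prod.trans (tsum_congr fun N => ?_)
    rw [Function.iterate_succ_apply', kernelOp, ← ih (hwN N), ← tsum_mul_left]
    exact tsum_congr (hsnoc N)

end KernelChain

/-! ### The multi-sum `G_m` -/

/-- The kernel of the operator by which one step of the Bailey chain acts on the rescaled sequence
`n ↦ (q; q)_n β_n`. -/
noncomputable def baileyKernel (a q : ℂ) (N r : ℕ) : ℂ := a ^ r * q ^ r ^ 2 * qBinom q N r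

lemma kernelOp_baileyKernel (a q : ℂ) (b : ℕ → ℂ) (N : ℕ) :
    kernelOp (baileyKernel a q) b N =
      ∑ r ∈ range (N + 1), a ^ r * q ^ r ^ 2 * qBinom q N r * b r :=
  tsum_eq_sum fun r hr => by
    rw [baileyKernel, qBinom_eq_zero_of_lt q (by simpa using hr), mul_zero, zero_mul]

lemma exists_norm_baileyKernel_le (ha : ‖a‖ ≤ 1) (hq : ‖q‖ < 1) :
    ∃ g : ℕ → ℝ, Summable g ∧ ∀ N r, ‖baileyKernel a q N r‖ ≤ g r := by
  obtain ⟨C, hC⟩ := exists_norm_qBinom_le hq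
  refine ⟨fun r => ‖q‖ ^ r * C,
    (summable_geometric_of_lt_one (norm_nonneg q) hq).mul_right C, fun N r => ?_⟩
  rw [baileyKernel, norm_mul, norm_mul, norm_pow, norm_pow]
  have hpow : ‖a‖ ^ r * ‖q‖ ^ r ^ 2 ≤ ‖q‖ ^ r :=
    (mul_le_of_le_one_left (by positivity) (pow_le_one₀ (norm_nonneg a) ha)).trans
      (pow_le_pow_of_le_one (norm_nonneg q) hq.le (Nat.le_self_pow two_ne_zero r))
  exact mul_le_mul hpow (hC N r) (norm_nonneg _) (by positivity)

theorem IsBaileyPair.iterate_kernelOp {α b : ℕ → ℂ}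
    (h : IsBaileyPair a q α fun n => b n / qPoch q q n)
    (hq : ∀ n, qPoch q q n ≠ 0) (ha : ∀ n, qPoch (a * q) q n ≠ 0) (k : ℕ) :
    IsBaileyPair a q (fun r => (a ^ r * q ^ r ^ 2) ^ k * α r)
      fun n => (kernelOp (baileyKernel a q))^[k] b n / qPoch q q n := by
  induction k with
  | zero => simpa only [pow_zero, one_mul, Function.iterate_zero, id] using h
  | succ k ih =>
    convert ih.chain hq ha using 2 with r n
    · ring
    rw [Function.iterate_succ_apply', kernelOp_baileyKernel, sum_div]
    refine sum_congr rfl fun r hr => ?_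
    rw [qBinom, if_pos (mem_range_succ_iff.mp hr)]
    have := hq n
    field_simp

lemma Gterm_pad (k : ℕ) (q : ℂ) (n : Fin (k + 1) → ℕ) :
    Gterm (k + 2) q (pad (k + 1) n) =
      (-1) ^ n (Fin.last k) *
          ((q ^ 2) ^ n (Fin.last k) * (q ^ 2) ^ (n (Fin.last k)).choose 2) *
        ((∏ i : Fin k, baileyKernel (q ^ 2) (q ^ 2) (n i.succ) (n i.castSucc)) *
          (qPoch q (q ^ 2) (n 0) / qPoch (-q) q (2 * n 0 + 1))) := by
  have hpad : ∀ i : Fin (k + 1), pad (k + 1) n i = n i := fun i => dif_pos i.isLt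
  have hlast : pad (k + 1) n k = n (Fin.last k) := hpad (Fin.last k)
  have hzero : pad (k + 1) n 0 = n 0 := hpad 0
  have hcast : ∀ i : Fin k, pad (k + 1) n i = n i.castSucc := fun i => hpad i.castSucc
  have hsucc : ∀ i : Fin k, pad (k + 1) n (i + 1) = n i.succ := fun i => hpad i.succ
  have hpow : ∀ r : ℕ, (q ^ 2) ^ r * (q ^ 2) ^ r.choose 2 = q ^ (r * (r + 1)) := fun r => by
    rw [← pow_mul, ← pow_mul, ← pow_add, mul_add, ← sq, ← two_mul_choose_two_add]
    ring_nf
  rw [Gterm, Nat.add_sub_cancel, sum_range, prod_range, hlast, hzero, hpow]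
  simp only [hcast, hsucc, baileyKernel, prod_mul_distrib]
  rw [← prod_mul_distrib, pow_add q, ← prod_pow_eq_pow_sum]
  have hweight : ∀ r : ℕ, q ^ (2 * r ^ 2 + 2 * r) = (q ^ 2) ^ r * (q ^ 2) ^ r ^ 2 := fun r => by
    ring
  simp only [hweight]
  ring

lemma G_eq_tsum_iterate (k : ℕ) (hq : ‖q‖ < 1) :
    G (k + 2) q = ∑' N, (-1) ^ N * ((q ^ 2) ^ N * (q ^ 2) ^ N.choose 2) *
      (kernelOp (baileyKernel (q ^ 2) (q ^ 2)))^[k]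
        (fun n => qPoch q (q ^ 2) n / qPoch (-q) q (2 * n + 1)) N := by
  have hp := norm_sq_lt_one hq
  obtain ⟨g, hg, hw⟩ := exists_norm_baileyKernel_le hp.le hp
  obtain ⟨B, hB⟩ := exists_norm_qPoch_le q hp
  obtain ⟨K, hK⟩ := exists_norm_inv_qPoch_le hq (qPoch_ne_zero ((norm_neg q).trans_lt hq) hq.le)
  have hb : ∀ n, ‖qPoch q (q ^ 2) n / qPoch (-q) q (2 * n + 1)‖ ≤ B * K := fun n => by
    rw [div_eq_mul_inv, norm_mul]
    exact mul_le_mul (hB n) (hK _) (norm_nonneg _) ((norm_nonneg _).trans (hB n))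
  have hs : Summable fun N : ℕ =>
      ‖(-1) ^ N * ((q ^ 2) ^ N * (q ^ 2) ^ N.choose 2)‖ := by
    refine (summable_norm_pow_mul_pow_choose_two (q ^ 2) hp).congr fun N => ?_
    rw [norm_mul ((-1) ^ N), norm_pow (-1), norm_neg, norm_one, one_pow, one_mul]
  rw [← tsum_kernel_chain hg hw hb hs k]
  change ∑' n : Fin (k + 1) → ℕ, Gterm (k + 2) q (pad (k + 1) n) = _
  exact tsum_congr (Gterm_pad k q)

lemma IsBaileyPair.tsum_div_qPoch_eq {α b : ℕ → ℂ}
    (h : IsBaileyPair q q α fun n => b n / qPoch q q n) (hq : ‖q‖ < 1) {C : ℝ}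
    (hα : ∀ r, ‖α r‖ ≤ C) :
    ∑' n, (-1) ^ n * (q ^ n * q ^ n.choose 2) * b n =
      ∑' r, (1 - q) * ((-1) ^ r * (q ^ r * q ^ r.choose 2)) * α r := by
  have hpoch := qPoch_ne_zero hq hq.le
  have hleft : ∀ n, (-1) ^ n * (q ^ n * q ^ n.choose 2) * qPoch q q n * (b n / qPoch q q n) =
      (-1) ^ n * (q ^ n * q ^ n.choose 2) * b n := fun n => by
    rw [mul_assoc _ (qPoch q q n), mul_div_cancel₀ _ (hpoch n)]
  simpa only [hleft, mul_div_cancel_right₀ _ (hpoch _)] using h.tsum_eq hq hpoch hα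

lemma norm_iterate_seed_le (hq : ‖q‖ ≤ 1) (k r : ℕ) :
    ‖((q ^ 2) ^ r * (q ^ 2) ^ r ^ 2) ^ k *
      ((-1) ^ r * (q ^ r ^ 2 - q ^ (r + 1) ^ 2) / (1 - q ^ 2))‖ ≤ 2 / ‖1 - q ^ 2‖ := by
  have hpow : ∀ e : ℕ, ‖q ^ e‖ ≤ 1 := fun e => by
    rw [norm_pow]
    exact pow_le_one₀ (norm_nonneg q) hq
  have hsub : ‖q ^ r ^ 2 - q ^ (r + 1) ^ 2‖ ≤ 2 :=
    (norm_sub_le _ _).trans ((add_le_add (hpow _) (hpow _)).trans_eq one_add_one_eq_two)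
  have hweight : ((q ^ 2) ^ r * (q ^ 2) ^ r ^ 2) ^ k = q ^ (2 * k * (r + r ^ 2)) := by ring
  rw [mul_div_assoc', norm_div, hweight, norm_mul, norm_mul, norm_pow (-1), norm_neg, norm_one,
    one_pow, one_mul]
  gcongr
  exact (mul_le_of_le_one_left (norm_nonneg _) (hpow _)).trans hsub

theorem G_eq_tsum (k : ℕ) (hq : ‖q‖ < 1) (hq₀ : q ≠ 0) :
    G (k + 2) q = ∑' r : ℕ, q ^ ((2 * k + 1) * (r ^ 2 + r)) * (q ^ r ^ 2 - q ^ (r + 1) ^ 2) := by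
  have hp := norm_sq_lt_one hq
  have hpoch := qPoch_ne_zero hp hp.le
  have hpair := (isBaileyPair_seed hq hq₀).iterate_kernelOp hpoch (qPoch_mul_ne_zero hpoch) k
  rw [G_eq_tsum_iterate k hq, hpair.tsum_div_qPoch_eq hp (norm_iterate_seed_le hq.le k)]
  refine tsum_congr fun r => ?_
  have hpow : q ^ ((2 * k + 1) * (r ^ 2 + r)) =
      (q ^ 2) ^ r * (q ^ 2) ^ r.choose 2 * ((q ^ 2) ^ r * (q ^ 2) ^ r ^ 2) ^ k := by
    rw [← two_mul_choose_two_add]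
    ring
  have hsign : (-1 : ℂ) ^ r * (-1) ^ r = 1 := by rw [← mul_pow, neg_one_mul, neg_neg, one_pow]
  have hone_sub := one_sub_ne_zero_of_qPoch_ne_zero hpoch
  rw [hpow]
  field_simp
  linear_combination (q ^ r ^ 2 - q ^ (r + 1) ^ 2) * hsign

lemma hasSum_ite_mod_eq {M : Type*} [AddCommMonoid M] [TopologicalSpace M] {f : ℕ → M} {S : M}
    {d c : ℕ} (hc : c < d) (h : HasSum (fun r => f (d * r + c)) S) :
    HasSum (fun n => if n % d = c then f n else 0) S := by
  have hinj : Function.Injective fun r => d * r + c := fun r s hrs =>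
    Nat.eq_of_mul_eq_mul_left (c.zero_le.trans_lt hc) (Nat.add_right_cancel hrs)
  refine (hinj.hasSum_iff fun n hn => if_neg fun hmod => hn ⟨n / d, ?_⟩).mp ?_
  · rw [← hmod]
    exact Nat.div_add_mod n d
  · refine h.congr_fun fun r => ?_
    simp [Nat.mod_eq_of_lt hc]

lemma chiG_add_two (k n : ℕ) :
    chiG (k + 2) n = (if n % (4 * (k + 1)) = 2 * k + 1 then 1 else 0) -
      if n % (4 * (k + 1)) = 2 * k + 3 then 1 else 0 := by
  have hmod : 4 * (((k + 2 : ℕ) : ℤ) - 1) = (4 * (k + 1) : ℕ) := by push_cast; ring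
  have hplus : 2 * ((k + 2 : ℕ) : ℤ) - 3 = (2 * k + 1 : ℕ) := by push_cast; ring
  have hminus : 2 * ((k + 2 : ℕ) : ℤ) - 1 = (2 * k + 3 : ℕ) := by push_cast; ring
  rw [chiG, hmod, hplus, hminus]
  simp only [← Int.natCast_mod, Nat.cast_inj]
  rw [Nat.mod_eq_of_lt (a := 2 * k + 1) (by omega), Nat.mod_eq_of_lt (a := 2 * k + 3) (by omega)]
  split_ifs <;> omega

lemma pow_mul_G_eq_tsum (k : ℕ) {t : ℂ} (ht : ‖t‖ < 1) :
    t ^ (2 * k + 1) ^ 2 * G (k + 2) (t ^ (8 * (k + 1))) =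
      ∑' r : ℕ, (t ^ (4 * (k + 1) * r + (2 * k + 1)) ^ 2 -
        t ^ (4 * (k + 1) * r + (2 * k + 3)) ^ 2) := by
  rcases eq_or_ne t 0 with rfl | ht₀
  · simp
  have hq : ‖t ^ (8 * (k + 1))‖ < 1 := by
    rw [norm_pow]
    exact pow_lt_one₀ (norm_nonneg t) ht (by positivity)
  rw [G_eq_tsum k hq (pow_ne_zero _ ht₀), ← tsum_mul_left]
  exact tsum_congr fun r => by ring

lemma summable_pow_sq {t : ℂ} (ht : ‖t‖ < 1) : Summable fun n : ℕ => t ^ n ^ 2 := by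
  refine (summable_geometric_of_lt_one (norm_nonneg t) ht).of_norm_bounded fun n => ?_
  rw [norm_pow]
  exact pow_le_pow_of_le_one (norm_nonneg t) ht.le (Nat.le_self_pow two_ne_zero n)

theorem hasSum_chiG_mul_pow_sq {m : ℕ} (hm : 2 ≤ m) {t : ℂ} (ht : ‖t‖ < 1) :
    HasSum (fun n : ℕ => (chiG m n : ℂ) * t ^ n ^ 2)
      (t ^ (2 * m - 3) ^ 2 * G m (t ^ (8 * (m - 1)))) := by
  obtain ⟨k, rfl⟩ := Nat.exists_eq_add_of_le' hm
  have hsummable : ∀ c, Summable fun r => t ^ (4 * (k + 1) * r + c) ^ 2 := fun c =>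
    (summable_pow_sq ht).comp_injective (i := fun r => 4 * (k + 1) * r + c) fun r s hrs => by
      simpa using hrs
  have hclass : ∀ c < 4 * (k + 1), HasSum
      (fun n => if n % (4 * (k + 1)) = c then t ^ n ^ 2 else 0)
      (∑' r, t ^ (4 * (k + 1) * r + c) ^ 2) := fun c hc =>
    hasSum_ite_mod_eq hc (hsummable c).hasSum
  have hG := pow_mul_G_eq_tsum k ht
  rw [(hsummable _).tsum_sub (hsummable _)] at hG
  rw [show 2 * (k + 2) - 3 = 2 * k + 1 by omega, show k + 2 - 1 = k + 1 by rfl, hG]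
  refine ((hclass (2 * k + 1) (by omega)).sub (hclass (2 * k + 3) (by omega))).congr_fun
    fun n => ?_
  rw [chiG_add_two]
  push_cast
  rw [sub_mul, ite_mul, ite_mul, one_mul, zero_mul]

lemma cpow_sq_div (q : ℂ) (n N : ℕ) : q ^ ((n : ℂ) ^ 2 / N) = (q ^ (N : ℂ)⁻¹) ^ n ^ 2 := by
  rw [← Complex.cpow_nat_mul, Nat.cast_pow, div_eq_mul_inv]

lemma norm_cpow_natCast_inv_lt_one (hq : ‖q‖ < 1) {N : ℕ} (hN : N ≠ 0) :
    ‖q ^ (N : ℂ)⁻¹‖ < 1 := by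
  rwa [← pow_lt_one_iff_of_nonneg (norm_nonneg _) hN, ← norm_pow, Complex.cpow_nat_inv_pow q hN]

end

theorem stmt11_general (m : ℕ) (hm : 2 ≤ m) (q : ℂ) (hq : ‖q‖ < 1) :
    HasSum (fun k : ℕ => (chiG m k : ℂ) * q ^ ((k : ℂ) ^ 2 / (8 * ((m : ℂ) - 1))))
      (q ^ ((2 * (m : ℂ) - 3) ^ 2 / (8 * ((m : ℂ) - 1))) * G m q) := by
  have hN : 8 * ((m : ℂ) - 1) = (8 * (m - 1) : ℕ) := by
    rw [Nat.cast_mul, Nat.cast_pred (by omega), Nat.cast_ofNat]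
  have hn : 2 * (m : ℂ) - 3 = (2 * m - 3 : ℕ) := by
    rw [Nat.cast_sub (by omega), Nat.cast_mul, Nat.cast_ofNat, Nat.cast_ofNat]
  have hN₀ : 8 * (m - 1) ≠ 0 := by omega
  have hsum := hasSum_chiG_mul_pow_sq hm (norm_cpow_natCast_inv_lt_one hq hN₀)
  rw [Complex.cpow_nat_inv_pow q hN₀] at hsum
  simpa only [hN, hn, cpow_sq_div] using hsum

theorem stmt11 (m : ℕ) (hm : 2 ≤ m) (q : ℝ) (hq0 : 0 < q) (hq1 : q < 1) :
    ((m : ℂ) - 1) *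
        ((q ^ ((2 * (m : ℝ) - 3) ^ 2 / (8 * ((m : ℝ) - 1))) : ℝ) : ℂ) * G m (q : ℂ) =
      ((m : ℂ) - 1) *
        ∑' k : ℕ, (chiG m k : ℂ) * ((q ^ ((k : ℝ) ^ 2 / (8 * ((m : ℝ) - 1))) : ℝ) : ℂ) := by
  have hsum := stmt11_general m hm q (by rwa [Complex.norm_of_nonneg hq0.le])
  push_cast [Complex.ofReal_cpow hq0.le]
  rw [hsum.tsum_eq, mul_assoc]
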